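/- Let 0<b<1 and δ ∈ ℝ, and set η(r) = sin(π · log r / log b). Then ∫_b^1 [ (η'(r))² − δ (η(r)/r + η'(r))² ] r dr = ( π² − δ(π² + (log b)²) ) / ( 2 log(1/b) ). In particular this quantity is strictly negative if and only if δ > π²/(π² + (log b)²). -/

import Mathlib

open Real Set

/-!
In the logarithmic coordinate `t = log r`, with `η r = u (log r)`, the weight `r` disappears and
the functional becomes `∫ (u'² - δ (u + u')²) dt`. Since `2 u u' = (u²)'`, the cross term only
contributes at the boundary, so for `u` vanishing at the ends what remains is
`(1 - δ) ∫ u'² - δ ∫ u²`. For the Dirichlet mode `u t = sin (k t)`, both `u²` and `(u' / k)²` have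
mean `1 / 2`; here `k = π / log b`.
-/

/-- The second variation, divided by `2π`, of the Oseen–Frank energy with elastic anisotropy `δ`
about the defect-free state `φ + π / 2` on the annulus `a ≤ r ≤ c`, evaluated at the radial
perturbation `η` of the angle. -/
noncomputable def radialSecondVariation (δ a c : ℝ) (η : ℝ → ℝ) : ℝ :=
  ∫ r in a..c, ((deriv η r) ^ 2 - δ * (η r / r + deriv η r) ^ 2) * r

theorem integral_inv_smul_comp_log {E : Type*} [NormedAddCommGroup E] [NormedSpace ℝ E]
    {a c : ℝ} (ha : 0 < a) (hc : 0 < c) (g : ℝ → E) :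
    ∫ r in a..c, r⁻¹ • g (log r) = ∫ t in log a..log c, g t := by
  have hpos : uIcc a c ⊆ Ioi 0 := ordConnected_Ioi.uIcc_subset ha hc
  exact intervalIntegral.integral_deriv_smul_comp_of_deriv_nonneg (g := g)
    (continuousOn_log.mono fun r hr => (hpos hr).ne')
    (fun r hr => hasDerivAt_log (hpos (Ioo_subset_Icc_self hr)).ne')
    (fun r hr => (inv_pos.2 (hpos (Ioo_subset_Icc_self hr))).le)

theorem radialSecondVariation_comp_log {a c : ℝ} (ha : 0 < a) (hc : 0 < c) (δ : ℝ) {u u' : ℝ → ℝ}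
    (hu : ∀ t ∈ uIcc (log a) (log c), HasDerivAt u (u' t) t) :
    radialSecondVariation δ a c (fun r => u (log r)) =
      ∫ t in log a..log c, (u' t ^ 2 - δ * (u t + u' t) ^ 2) := by
  rw [radialSecondVariation, ← integral_inv_smul_comp_log ha hc]
  refine intervalIntegral.integral_congr fun r hr => ?_
  have hpos : uIcc a c ⊆ Ioi 0 := ordConnected_Ioi.uIcc_subset ha hc
  have hr0 : r ≠ 0 := ne_of_gt (hpos hr)
  have hlog : log r ∈ uIcc (log a) (log c) :=
    (strictMonoOn_log.monotoneOn.mono hpos).mapsTo_uIcc hr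
  have hderiv : deriv (fun r => u (log r)) r = u' (log r) * r⁻¹ :=
    ((hu _ hlog).comp r (hasDerivAt_log hr0)).deriv
  simp only [hderiv, smul_eq_mul]
  field_simp

theorem integral_sq_sub_mul_add_sq {a c : ℝ} (δ : ℝ) {u u' : ℝ → ℝ}
    (hu : ∀ t ∈ uIcc a c, HasDerivAt u (u' t) t) (hu' : ContinuousOn u' (uIcc a c)) :
    ∫ t in a..c, (u' t ^ 2 - δ * (u t + u' t) ^ 2) =
      (1 - δ) * (∫ t in a..c, u' t ^ 2) - δ * (∫ t in a..c, u t ^ 2) - δ * (u c ^ 2 - u a ^ 2) := by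
  have hu_cont : ContinuousOn u (uIcc a c) := HasDerivAt.continuousOn hu
  have hsq : IntervalIntegrable (fun t => u t ^ 2) MeasureTheory.volume a c :=
    (hu_cont.pow 2).intervalIntegrable
  have hsq' : IntervalIntegrable (fun t => u' t ^ 2) MeasureTheory.volume a c :=
    (hu'.pow 2).intervalIntegrable
  have hcross : IntervalIntegrable (fun t => 2 * u t * u' t) MeasureTheory.volume a c :=
    ((hu_cont.const_mul 2).mul hu').intervalIntegrable
  have hcross_eq : ∫ t in a..c, 2 * u t * u' t = u c ^ 2 - u a ^ 2 :=
    intervalIntegral.integral_eq_sub_of_hasDerivAt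
      (fun t ht => by simpa using (hu t ht).pow 2) hcross
  calc ∫ t in a..c, (u' t ^ 2 - δ * (u t + u' t) ^ 2)
      = ∫ t in a..c, ((1 - δ) * u' t ^ 2 - δ * u t ^ 2 - δ * (2 * u t * u' t)) := by
        congr! 2 with t; ring
    _ = _ := by
        rw [intervalIntegral.integral_sub ((hsq'.const_mul _).sub (hsq.const_mul _))
            (hcross.const_mul _),
          intervalIntegral.integral_sub (hsq'.const_mul _) (hsq.const_mul _)]
        simp only [intervalIntegral.integral_const_mul, hcross_eq]

theorem integral_sin_mul_sq_of_sin_eq_zero {k a c : ℝ} (hk : k ≠ 0)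
    (ha : sin (k * a) = 0) (hc : sin (k * c) = 0) :
    ∫ t in a..c, sin (k * t) ^ 2 = (c - a) / 2 := by
  rw [intervalIntegral.integral_comp_mul_left (fun x => sin x ^ 2) hk, integral_sin_sq, ha, hc,
    smul_eq_mul]
  field_simp
  ring

theorem integral_cos_mul_sq_of_sin_eq_zero {k a c : ℝ} (hk : k ≠ 0)
    (ha : sin (k * a) = 0) (hc : sin (k * c) = 0) :
    ∫ t in a..c, cos (k * t) ^ 2 = (c - a) / 2 := by
  rw [intervalIntegral.integral_comp_mul_left (fun x => cos x ^ 2) hk, integral_cos_sq, ha, hc,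
    smul_eq_mul]
  field_simp
  ring

theorem radialSecondVariation_sin_mul_log {k a c : ℝ} (hk : k ≠ 0) (ha : 0 < a) (hc : 0 < c)
    (hka : sin (k * log a) = 0) (hkc : sin (k * log c) = 0) (δ : ℝ) :
    radialSecondVariation δ a c (fun r => sin (k * log r)) =
      ((1 - δ) * k ^ 2 - δ) * (log c - log a) / 2 := by
  have hderiv (t : ℝ) : HasDerivAt (fun t => sin (k * t)) (k * cos (k * t)) t := by
    simpa [mul_comm] using ((hasDerivAt_id t).const_mul k).sin
  rw [radialSecondVariation_comp_log ha hc δ fun t _ => hderiv t,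
    integral_sq_sub_mul_add_sq δ (fun t _ => hderiv t) (by fun_prop)]
  simp only [mul_pow, intervalIntegral.integral_const_mul,
    integral_sin_mul_sq_of_sin_eq_zero hk hka hkc, integral_cos_mul_sq_of_sin_eq_zero hk hka hkc,
    hka, hkc]
  ring

/-- For `0 < b < 1`, `δ ∈ ℝ` and `η r = sin(π log r / log b)`, one has
`∫_b^1 [(η')² − δ(η/r + η')²] r dr = (π² − δ(π² + (log b)²))/(2 log(1/b))`,
which is strictly negative iff `δ > π²/(π² + (log b)²)`. -/
theorem stmt_4 (b : ℝ) (hb0 : 0 < b) (hb1 : b < 1) (δ : ℝ)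
    (η : ℝ → ℝ) (hη : η = fun r => Real.sin (π * Real.log r / Real.log b)) :
    (∫ r in b..1, ((deriv η r) ^ 2 - δ * (η r / r + deriv η r) ^ 2) * r)
      = (π ^ 2 - δ * (π ^ 2 + (Real.log b) ^ 2)) / (2 * Real.log (1 / b)) ∧
    ((∫ r in b..1, ((deriv η r) ^ 2 - δ * (η r / r + deriv η r) ^ 2) * r) < 0
      ↔ δ > π ^ 2 / (π ^ 2 + (Real.log b) ^ 2)) := by
  have hlog : log b ≠ 0 := (log_neg hb0 hb1).ne
  have hmode : η = fun r => sin (π / log b * log r) := by simp only [hη, mul_div_right_comm]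
  have hvalue : radialSecondVariation δ b 1 η
      = (π ^ 2 - δ * (π ^ 2 + (log b) ^ 2)) / (2 * log (1 / b)) := by
    rw [hmode, radialSecondVariation_sin_mul_log (div_ne_zero pi_ne_zero hlog) hb0 one_pos
      (by rw [div_mul_cancel₀ _ hlog, sin_pi]) (by simp), log_one, one_div, log_inv]
    field_simp
    ring
  refine ⟨hvalue, ?_⟩
  have hden : 0 < 2 * log (1 / b) := mul_pos two_pos (log_pos (one_lt_one_div hb0 hb1))
  have hnorm : 0 < π ^ 2 + (log b) ^ 2 := by positivity
  rw [← radialSecondVariation, hvalue, div_lt_iff₀ hden, zero_mul, sub_neg, gt_iff_lt,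
    div_lt_iff₀ hnorm]
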